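/- arXiv:0911.1093 — 2 statements merged into one kernel-verified Lean document; each statement's English description precedes it below -/
import Mathlib

section
/- Let p ≥ 5 be a prime, q = 2(p−1), and let n ≥ 6 be an integer. Then the unique admissible monomial of total filtration p−1 and total degree q((p−1)p^{n−1} + (p−1)p^{n−2} + ⋯ + (p−1)p² + (p−2)p + (p−2)) + (p−3) is the multiset consisting of a_n with multiplicity p−3 together with h_{n,0} and h_{n−2,2}. (This is the combinatorial content of the step in the proof of Lemma 3.1, case (ii), where ω₁ is shown to equal a_n^{p−3} h_{n,0} h_{n−2,2} up to sign.) -/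
/-- A formal May spectral sequence generator: `a k`, `h i j`, or `b i j`. -/
inductive MayGen : Type
  | a (k : ℕ)
  | h (i j : ℕ)
  | b (i j : ℕ)
  deriving DecidableEq

namespace MayGen

/-- Validity: the generators `h i j` and `b i j` require `i ≥ 1`. -/
def IsValid : MayGen → Prop
  | a _ => True
  | h i _ => 1 ≤ i
  | b i _ => 1 ≤ i

/-- May filtration of a generator. -/
def filt : MayGen → ℕ
  | a _ => 1
  | h _ _ => 1
  | b _ _ => 2

/-- Internal degree of a generator (at the prime `p`). -/
def deg (p : ℕ) : MayGen → ℕ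
  | a k => 2 * p ^ k - 1
  | h i j => 2 * (p ^ i - 1) * p ^ j
  | b i j => 2 * (p ^ i - 1) * p ^ (j + 1)

end MayGen

/-- Total filtration of a multiset of May generators. -/
def totalFilt (S : Multiset MayGen) : ℕ := (S.map MayGen.filt).sum

/-- Total internal degree of a multiset of May generators. -/
def totalDeg (p : ℕ) (S : Multiset MayGen) : ℕ := (S.map (MayGen.deg p)).sum

/-- An admissible monomial: each exterior generator `h i j` occurs at most once. -/
def Admissible (S : Multiset MayGen) : Prop := ∀ i j : ℕ, S.count (MayGen.h i j) ≤ 1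

/-- The `j`-th digit (`j ≥ -1`) of `t` in the mixed radix `(q, p, p, …)` with
`q = 2(p-1)`:  `t = c₋₁ + q·Σ_{j≥0} c_j p^j` with `0 ≤ c₋₁ < q`, `0 ≤ c_j < p`. -/
def mayDigit (p t : ℕ) (j : ℤ) : ℕ :=
  if j = -1 then t % (2 * (p - 1))
  else if 0 ≤ j then (t / (2 * (p - 1)) / p ^ j.toNat) % p
  else 0

theorem aux_shift (M : Multiset ℕ) :
    ∃ (c : ℕ) (M' : Multiset ℕ), M = Multiset.replicate c 0 + M'.map (· + 1) := by
  induction M using Multiset.induction with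
  | empty => exact ⟨0, 0, by simp⟩
  | cons x M ih =>
    obtain ⟨c, M', rfl⟩ := ih
    cases x with
    | zero => exact ⟨c + 1, M', by simp [Multiset.replicate_succ]⟩
    | succ x => exact ⟨c, x ::ₘ M', by simp⟩

theorem aux_sum_shift (p c : ℕ) (M' : Multiset ℕ) :
    ((Multiset.replicate c 0 + M'.map (· + 1)).map (fun k => p ^ k)).sum
      = c + p * (M'.map (fun k => p ^ k)).sum := by
  simp [Multiset.map_map, pow_succ', Multiset.sum_map_mul_left]

theorem aux_count_zero (c : ℕ) (M' : Multiset ℕ) :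
    (Multiset.replicate c 0 + M'.map (· + 1)).count 0 = c := by
  simp

theorem aux_count_succ (c x : ℕ) (M' : Multiset ℕ) :
    (Multiset.replicate c 0 + M'.map (· + 1)).count (x + 1) = M'.count x := by
  rw [Multiset.count_add, Multiset.count_replicate, if_neg (by omega), zero_add]
  exact Multiset.count_map_eq_count' _ _ (fun a b h => by simpa using h) x

/-- A carry-free sum of powers of `p` is the unique shortest one with the given value. -/
theorem aux_digits (p : ℕ) (hp : 2 ≤ p) : ∀ (s : ℕ) (M N : Multiset ℕ),
    (M.map (fun k => p ^ k)).sum = s → (N.map (fun k => p ^ k)).sum = s →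
    N.card ≤ M.card → (∀ x, M.count x < p) → M = N := by
  intro s
  induction s using Nat.strong_induction_on with
  | _ s ih =>
    intro M N hM hN hc hlt
    obtain ⟨c, M', rfl⟩ := aux_shift M
    obtain ⟨d, N', rfl⟩ := aux_shift N
    have h0 := hlt 0
    rw [aux_count_zero] at h0
    have h1 : ∀ x, M'.count x < p := fun x => by
      have := hlt (x + 1)
      rwa [aux_count_succ] at this
    rw [aux_sum_shift] at hM hN
    simp only [Multiset.card_add, Multiset.card_replicate, Multiset.card_map] at hc
    have hmod : d % p = c := by
      have h2 : (d + p * (N'.map (fun k => p ^ k)).sum) % p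
          = (c + p * (M'.map (fun k => p ^ k)).sum) % p := by rw [hM, hN]
      rw [Nat.add_mul_mod_self_left, Nat.add_mul_mod_self_left, Nat.mod_eq_of_lt h0] at h2
      exact h2
    have hd := Nat.mod_add_div d p
    rw [hmod] at hd
    set t := d / p with ht
    have hsum : (M'.map (fun k => p ^ k)).sum = t + (N'.map (fun k => p ^ k)).sum := by
      have : p * (M'.map (fun k => p ^ k)).sum = p * (t + (N'.map (fun k => p ^ k)).sum) := by
        rw [mul_add]; omega
      exact Nat.eq_of_mul_eq_mul_left (by omega) this
    have htp : 2 * t ≤ p * t := Nat.mul_le_mul_right _ hp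
    rcases Nat.eq_zero_or_pos s with hs | hs
    · have hc0 : c = 0 := by omega
      have hd0 : d = 0 := by omega
      have key : ∀ Q : Multiset ℕ, (Q.map (fun k => p ^ k)).sum = 0 → Q = 0 := by
        intro Q hQ
        rw [Multiset.sum_eq_zero_iff] at hQ
        refine Multiset.eq_zero_of_forall_notMem fun x hx => ?_
        have := hQ (p ^ x) (Multiset.mem_map_of_mem _ hx)
        exact absurd this (pow_ne_zero _ (by omega))
      have hM0 : M' = 0 := key _ (by
        have : p * (M'.map (fun k => p ^ k)).sum = 0 := by omega
        rcases Nat.mul_eq_zero.mp this with h | h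
        · omega
        · exact h)
      have hN0 : N' = 0 := key _ (by
        have : p * (N'.map (fun k => p ^ k)).sum = 0 := by omega
        rcases Nat.mul_eq_zero.mp this with h | h
        · omega
        · exact h)
      subst hM0 hN0 hc0
      rw [hd0]
    · have hlt' : (M'.map (fun k => p ^ k)).sum < s := by
        have : 2 * (M'.map (fun k => p ^ k)).sum ≤ p * (M'.map (fun k => p ^ k)).sum :=
          Nat.mul_le_mul_right _ hp
        omega
      have := ih _ hlt' M' (Multiset.replicate t 0 + N') rfl (by simp [hsum])
        (by simp; omega) h1
      have hcard := congrArg Multiset.card this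
      simp at hcard
      have ht0 : t = 0 := by omega
      rw [ht0] at this hd
      have hcd : c = d := by omega
      rw [this, hcd]
      simp

theorem aux_decomp (S : Multiset MayGen) :
    ∃ (A : Multiset ℕ) (H B : Multiset (ℕ × ℕ)),
      S = A.map MayGen.a + H.map (fun x => MayGen.h x.1 x.2)
        + B.map (fun x => MayGen.b x.1 x.2) := by
  induction S using Multiset.induction with
  | empty => exact ⟨0, 0, 0, by simp⟩
  | cons x S ih =>
    obtain ⟨A, H, B, rfl⟩ := ih
    cases x with
    | a k => exact ⟨k ::ₘ A, H, B, by simp⟩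
    | h i j => exact ⟨A, (i, j) ::ₘ H, B, by simp⟩
    | b i j => exact ⟨A, H, (i, j) ::ₘ B, by simp⟩

theorem aux_dvd (p i : ℕ) (hp : 5 ≤ p) : ∃ T, p ^ i = (p - 1) * T + 1 := by
  obtain ⟨T, hT⟩ := Nat.sub_dvd_pow_sub_pow p 1 i
  rw [one_pow] at hT
  have : 0 < p ^ i := by positivity
  exact ⟨T, by omega⟩

theorem aux_degA (p : ℕ) (hp : 5 ≤ p) (A : Multiset ℕ) :
    (A.map (fun k => 2 * p ^ k - 1)).sum + A.card = 2 * (A.map (fun k => p ^ k)).sum := by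
  induction A using Multiset.induction with
  | empty => simp
  | cons x A ih =>
    have : 0 < p ^ x := by positivity
    simp only [Multiset.map_cons, Multiset.sum_cons, Multiset.card_cons]
    omega

theorem aux_modA (p : ℕ) (hp : 5 ≤ p) (A : Multiset ℕ) :
    ∃ T, (A.map (fun k => 2 * p ^ k - 1)).sum = A.card + 2 * (p - 1) * T := by
  induction A using Multiset.induction with
  | empty => exact ⟨0, by simp⟩
  | cons x A ih =>
    obtain ⟨T, hT⟩ := ih
    obtain ⟨U, hU⟩ := aux_dvd p x hp
    refine ⟨U + T, ?_⟩
    simp only [Multiset.map_cons, Multiset.sum_cons, Multiset.card_cons, hT, hU]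
    have : 2 * ((p - 1) * U + 1) - 1 = 2 * (p - 1) * U + 1 := by
      rw [mul_add, ← mul_assoc]; omega
    rw [this]; ring

theorem aux_modH (p : ℕ) (hp : 5 ≤ p) (f : ℕ → ℕ) (H : Multiset (ℕ × ℕ)) :
    ∃ T, (H.map (fun x => 2 * (p ^ x.1 - 1) * p ^ (f x.2))).sum = 2 * (p - 1) * T := by
  induction H using Multiset.induction with
  | empty => exact ⟨0, by simp⟩
  | cons x H ih =>
    obtain ⟨T, hT⟩ := ih
    obtain ⟨U, hU⟩ := aux_dvd p x.1 hp
    refine ⟨U * p ^ (f x.2) + T, ?_⟩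
    simp only [Multiset.map_cons, Multiset.sum_cons, hT, hU, Nat.add_sub_cancel]
    ring

theorem aux_hdeg (p i j : ℕ) (hp : 5 ≤ p) :
    2 * (p ^ i - 1) * p ^ j + 2 * p ^ j = 2 * p ^ (i + j) := by
  have : 0 < p ^ i := by positivity
  obtain ⟨m, hm⟩ : ∃ m, p ^ i = m + 1 := ⟨p ^ i - 1, by omega⟩
  rw [pow_add, hm, Nat.add_sub_cancel]
  ring

theorem aux_geom (p n : ℕ) (hp : 5 ≤ p) (hn : 6 ≤ n) :
    (p - 1) * ∑ j ∈ Finset.Icc 2 (n - 1), p ^ j + p ^ 2 = p ^ n := by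
  obtain ⟨r, rfl⟩ : ∃ r, p = r + 1 := ⟨p - 1, by omega⟩
  obtain ⟨m, rfl⟩ : ∃ m, n = m + 2 := ⟨n - 2, by omega⟩
  clear hn hp
  rw [show m + 2 - 1 = m + 1 by omega, Nat.add_sub_cancel]
  induction m with
  | zero => simp
  | succ m ih =>
    rw [Finset.sum_Icc_succ_top (by omega), mul_add]
    calc _ = (r * ∑ j ∈ Finset.Icc 2 (m + 1), (r + 1) ^ j + (r + 1) ^ 2)
            + r * (r + 1) ^ (m + 1 + 1) := by ring
      _ = _ := by rw [ih]; ring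

/-- The target degree, in closed form. -/
theorem aux_target (p n : ℕ) (hp : 5 ≤ p) (hn : 6 ≤ n) :
    2 * (p - 1) * ((p - 1) * ∑ j ∈ Finset.Icc 2 (n - 1), p ^ j +
            (p - 2) * p + (p - 2)) + (p - 3) + (p - 3) + 2 * p ^ 2 + 2 =
      2 * ((p - 1) * p ^ n) := by
  rw [← aux_geom p n hp hn]
  obtain ⟨r, rfl⟩ : ∃ r, p = r + 5 := ⟨p - 5, by omega⟩
  rw [show r + 5 - 1 = r + 4 by omega, show r + 5 - 2 = r + 3 by omega,
    show r + 5 - 3 = r + 2 by omega]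
  ring

theorem aux_caseB (p n : ℕ) (hp : 5 ≤ p) (hn : 6 ≤ n) (A : Multiset ℕ)
    (hA : A.card = p - 3) (u v : ℕ) (hv : 1 ≤ v)
    (h : (A.map (fun k => p ^ k)).sum + p ^ u + p ^ 2 + 1 = (p - 1) * p ^ n + p ^ v) :
    False := by
  have key := aux_digits p (by omega) _ (A + {u, 2, 0}) (Multiset.replicate (p - 1) n + {v}) rfl
    (by simp; omega) (by simp; omega) (by
      intro x
      have := Multiset.count_le_card x A
      simp only [Multiset.insert_eq_cons, Multiset.count_add, Multiset.count_cons,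
        Multiset.count_singleton]
      split_ifs <;> omega)
  have h0 : 0 ∈ A + {u, 2, 0} := by simp
  rw [key] at h0
  simp [Multiset.mem_replicate] at h0
  omega

theorem aux_caseH (p n : ℕ) (hp : 5 ≤ p) (hn : 6 ≤ n) (A : Multiset ℕ)
    (hA : A.card = p - 3) (u v w z : ℕ) (hu : 1 ≤ u) (hw : 1 ≤ w)
    (h : (A.map (fun k => p ^ k)).sum + p ^ u + p ^ w + p ^ 2 + 1
      = (p - 1) * p ^ n + p ^ v + p ^ z) :
    A = Multiset.replicate (p - 3) n ∧ u = n ∧ w = n ∧ (v = 0 ∧ z = 2 ∨ v = 2 ∧ z = 0) := by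
  have key := aux_digits p (by omega) _ (A + {u, w, 2, 0})
    (Multiset.replicate (p - 1) n + {v, z}) rfl
    (by simp; omega) (by simp; omega) (by
      intro x
      have hx := Multiset.count_le_card x A
      by_contra hcon
      have h2 : x = 2 ∧ u = 2 ∧ w = 2 ∧ A.count x = A.card := by
        simp only [Multiset.insert_eq_cons, Multiset.count_add, Multiset.count_cons,
          Multiset.count_singleton] at hcon
        split_ifs at hcon <;> omega
      obtain ⟨rfl, rfl, rfl, h3⟩ := h2
      rw [Multiset.count_eq_card] at h3
      have h4 : A = Multiset.replicate (p - 3) 2 :=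
        Multiset.eq_replicate.mpr ⟨hA, fun b hb => (h3 b hb).symm⟩
      rw [h4] at h
      simp at h
      obtain ⟨r, rfl⟩ : ∃ r, p = r + 5 := ⟨p - 5, by omega⟩
      rw [show r + 5 - 1 = r + 4 by omega, show r + 5 - 3 = r + 2 by omega] at h
      have h5 : (r + 5) ^ 3 ≤ (r + 5) ^ n := Nat.pow_le_pow_right (by omega) (by omega)
      have h6 : 4 * (r + 5) ^ n ≤ (r + 4) * (r + 5) ^ n := Nat.mul_le_mul_right _ (by omega)
      nlinarith [sq_nonneg r, Nat.zero_le (r ^ 3), Nat.zero_le ((r + 5) ^ v),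
        Nat.zero_le ((r + 5) ^ z)])
  have hvz : v = 0 ∧ z = 2 ∨ v = 2 ∧ z = 0 := by
    have h0 : 0 ∈ A + {u, w, 2, 0} := by simp
    have h2 : 2 ∈ A + {u, w, 2, 0} := by simp
    rw [key] at h0 h2
    simp [Multiset.mem_replicate] at h0 h2
    omega
  have e : ({v, z} : Multiset ℕ) = {2, 0} := by
    rcases hvz with ⟨rfl, rfl⟩ | ⟨rfl, rfl⟩
    · exact Multiset.pair_comm _ _
    · rfl
  rw [e, show ({u, w, 2, 0} : Multiset ℕ) = {u, w} + {2, 0} from rfl, ← add_assoc] at key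
  have key2 := (add_left_inj _).mp key
  have hall : ∀ b ∈ A + {u, w}, b = n := by
    rw [key2]; exact fun b hb => Multiset.eq_of_mem_replicate hb
  refine ⟨Multiset.eq_replicate.mpr ⟨hA, fun b hb => hall b (by simp [hb])⟩,
    hall u (by simp), hall w (by simp), hvz⟩

/-- for `n ≥ 6`, the unique admissible monomial of total filtration `p-1`
and total degree `q((p-1)p^{n-1} + ⋯ + (p-1)p² + (p-2)p + (p-2)) + (p-3)` is
`aₙ^{p-3} h_{n,0} h_{n-2,2}`. -/
theorem stmt13 (p : ℕ) (hp : p.Prime) (hp5 : 5 ≤ p) (n : ℕ) (hn : 6 ≤ n)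
    (S : Multiset MayGen) :
    ((∀ x ∈ S, x.IsValid) ∧ Admissible S ∧ totalFilt S = p - 1 ∧
        totalDeg p S =
          2 * (p - 1) * ((p - 1) * ∑ j ∈ Finset.Icc 2 (n - 1), p ^ j +
            (p - 2) * p + (p - 2)) + (p - 3)) ↔
      S = Multiset.replicate (p - 3) (MayGen.a n) + {MayGen.h n 0, MayGen.h (n - 2) 2} := by
  have htar := aux_target p n hp5 hn
  constructor
  · rintro ⟨hval, -, hf, hdeg⟩
    obtain ⟨A, H, B, rfl⟩ := aux_decomp S
    have hf' : A.card + H.card + 2 * B.card = p - 1 := by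
      rw [← hf]
      simp [totalFilt, Multiset.map_map, Function.comp_def, MayGen.filt, mul_comm]
    have hd' : totalDeg p (A.map MayGen.a + H.map (fun x => MayGen.h x.1 x.2)
        + B.map (fun x => MayGen.b x.1 x.2)) =
        (A.map (fun k => 2 * p ^ k - 1)).sum
        + (H.map (fun x => 2 * (p ^ x.1 - 1) * p ^ x.2)).sum
        + (B.map (fun x => 2 * (p ^ x.1 - 1) * p ^ (x.2 + 1))).sum := by
      simp [totalDeg, Multiset.map_map, Function.comp_def, MayGen.deg]
    rw [hd'] at hdeg
    have hAc : A.card = p - 3 := by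
      obtain ⟨T, hT⟩ := aux_modA p hp5 A
      obtain ⟨U, hU⟩ := aux_modH p hp5 (fun x => x) H
      obtain ⟨V, hV⟩ := aux_modH p hp5 (fun x => x + 1) B
      have h1 : A.card + 2 * (p - 1) * (T + U + V) = (p - 3) + 2 * (p - 1) *
          ((p - 1) * ∑ j ∈ Finset.Icc 2 (n - 1), p ^ j + (p - 2) * p + (p - 2)) := by
        rw [add_comm (p - 3), ← hdeg, hT, hU, hV]
        ring
      have h2 := congrArg (· % (2 * (p - 1))) h1
      simp only [Nat.add_mul_mod_self_left] at h2
      rw [Nat.mod_eq_of_lt (by omega), Nat.mod_eq_of_lt (by omega)] at h2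
      exact h2
    have hdA := aux_degA p hp5 A
    have hcase : (H.card = 0 ∧ B.card = 1) ∨ (H.card = 2 ∧ B.card = 0) := by omega
    rcases hcase with ⟨hH, hB⟩ | ⟨hH, hB⟩
    · exfalso
      obtain ⟨⟨i, j⟩, rfl⟩ := Multiset.card_eq_one.mp hB
      rw [Multiset.card_eq_zero] at hH
      subst hH
      have := aux_hdeg p i (j + 1) hp5
      simp only [Multiset.map_singleton, Multiset.sum_singleton, Multiset.map_zero,
        Multiset.sum_zero] at hdeg
      exact aux_caseB p n hp5 hn A hAc (i + (j + 1)) (j + 1) (by omega) (by omega)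
    · obtain ⟨⟨i, j⟩, ⟨k, l⟩, rfl⟩ := Multiset.card_eq_two.mp hH
      rw [Multiset.card_eq_zero] at hB
      subst hB
      have e1 := aux_hdeg p i j hp5
      have e2 := aux_hdeg p k l hp5
      have v1 : 1 ≤ i := hval (MayGen.h i j) (by simp)
      have v2 : 1 ≤ k := hval (MayGen.h k l) (by simp)
      simp only [Multiset.insert_eq_cons, Multiset.map_cons, Multiset.sum_cons,
        Multiset.map_singleton, Multiset.sum_singleton, Multiset.map_zero,
        Multiset.sum_zero] at hdeg
      obtain ⟨hA, hu, hw, hvz⟩ := aux_caseH p n hp5 hn A hAc (i + j) j (k + l) l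
        (by omega) (by omega) (by omega)
      rw [hA]
      rcases hvz with ⟨rfl, rfl⟩ | ⟨rfl, rfl⟩
      · obtain rfl : i = n := by omega
        obtain rfl : k = i - 2 := by omega
        simp
      · obtain rfl : k = n := by omega
        obtain rfl : i = k - 2 := by omega
        simp only [Multiset.map_replicate, Multiset.insert_eq_cons, Multiset.map_cons,
          Multiset.map_singleton, Multiset.map_zero, add_zero]
        exact congrArg _ (Multiset.pair_comm _ _)
  · rintro rfl
    refine ⟨?_, ?_, ?_, ?_⟩
    · intro x hx
      simp only [Multiset.mem_add, Multiset.mem_replicate, Multiset.insert_eq_cons,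
        Multiset.mem_cons, Multiset.mem_singleton] at hx
      rcases hx with ⟨-, rfl⟩ | rfl | rfl
      · trivial
      · show 1 ≤ n
        omega
      · show 1 ≤ n - 2
        omega
    · intro i j
      simp only [Multiset.count_add, Multiset.count_replicate, Multiset.insert_eq_cons,
        Multiset.count_cons, Multiset.count_singleton, MayGen.h.injEq, reduceCtorEq, if_false]
      split_ifs <;> omega
    · simp [totalFilt, MayGen.filt]
      omega
    · have e1 := aux_hdeg p n 0 hp5
      have e2 := aux_hdeg p (n - 2) 2 hp5
      rw [show n - 2 + 2 = n by omega] at e2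
      have hd : totalDeg p (Multiset.replicate (p - 3) (MayGen.a n)
          + {MayGen.h n 0, MayGen.h (n - 2) 2}) =
          (p - 3) * (2 * p ^ n - 1) + (2 * (p ^ n - 1) * p ^ 0
            + 2 * (p ^ (n - 2) - 1) * p ^ 2) := by
        simp [totalDeg, MayGen.deg]
        ring
      rw [hd]
      have e3 : (p - 3) * (2 * p ^ n - 1) + (p - 3) + 4 * p ^ n = 2 * ((p - 1) * p ^ n) := by
        have : 0 < p ^ n := by positivity
        obtain ⟨m, hm⟩ : ∃ m, p ^ n = m + 1 := ⟨p ^ n - 1, by omega⟩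
        obtain ⟨r, rfl⟩ : ∃ r, p = r + 5 := ⟨p - 5, by omega⟩
        rw [hm, show r + 5 - 1 = r + 4 by omega, show r + 5 - 3 = r + 2 by omega,
          show 2 * (m + 1) - 1 = 2 * m + 1 by omega]
        ring
      simp only [pow_zero, add_zero] at e1 ⊢
      omega
end

section
/- Let p ≥ 5 be a prime, q = 2(p−1), and let n ≥ 2 be an integer. Then there is no admissible monomial of total filtration p−1 and total degree q(p^n − 1) + (p − 3): every finite multiset of May generators with this total filtration and total degree must contain the exterior generator h_{n,0} at least twice and hence corresponds to the zero monomial. (This is the combinatorial content of the step in the proof of Lemma 3.1, case (i), where ω₁ is shown to vanish because it must contain two h_{n,0}'s.) -/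
/-- Repunit `1 + p + ... + p^(k-1)`. -/
def repU (p : ℕ) : ℕ → ℕ
  | 0 => 0
  | k + 1 => 1 + p * repU p k

/-- The degree divided by `q`. -/
def eQ (p : ℕ) : MayGen → ℕ
  | .a k => repU p k
  | .h i j => repU p i * p ^ j
  | .b i j => repU p i * p ^ (j + 1)

/-- The degree modulo `q`. -/
def tQ : MayGen → ℕ
  | .a _ => 1
  | .h _ _ => 0
  | .b _ _ => 0

/-- Length of the interval of digits. -/
def lenQ : MayGen → ℕ
  | .a k => k
  | .h i _ => i
  | .b i _ => i

lemma repU_eq (m k : ℕ) : (m + 1) ^ k = m * repU (m + 1) k + 1 := by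
  induction k with
  | zero => simp [repU]
  | succ k ih => rw [pow_succ, repU, ih]; ring

lemma deg_eq (m : ℕ) (x : MayGen) : x.deg (m + 1) = 2 * m * eQ (m + 1) x + tQ x := by
  cases x with
  | a k => simp only [MayGen.deg, eQ, tQ, repU_eq]; rw [mul_assoc]; omega
  | h i j => simp only [MayGen.deg, eQ, tQ]; rw [repU_eq m i, Nat.add_sub_cancel]; ring
  | b i j => simp only [MayGen.deg, eQ, tQ]; rw [repU_eq m i, Nat.add_sub_cancel]; ring

lemma repU_mod (p k : ℕ) (hp : 2 ≤ p) : repU p k % p ≤ 1 := by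
  cases k with
  | zero => simp [repU]
  | succ k => rw [repU, Nat.add_mul_mod_self_left, Nat.mod_eq_of_lt (by omega)]

lemma eQ_mod (p : ℕ) (hp : 2 ≤ p) (x : MayGen) : eQ p x % p ≤ 1 := by
  cases x with
  | a k => exact repU_mod p k hp
  | h i j =>
    cases j with
    | zero => simpa [eQ] using repU_mod p i hp
    | succ j => simp [eQ, pow_succ, ← mul_assoc]
  | b i j => simp [eQ, pow_succ, ← mul_assoc]

lemma sum_mod_aux {α : Type*} (p : ℕ) (f : α → ℕ) (S : Multiset α) :
    (∀ x ∈ S, f x % p ≤ 1) → ∃ K L, (S.map f).sum = p * K + L ∧ L ≤ S.card ∧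
      (L = S.card → ∀ x ∈ S, f x % p = 1) := by
  induction S using Multiset.induction_on with
  | empty => intro _; exact ⟨0, 0, by simp⟩
  | cons a S ih =>
    intro h
    obtain ⟨K, L, h1, h2, h3⟩ := ih fun x hx => h x (Multiset.mem_cons_of_mem hx)
    have ha := h a (Multiset.mem_cons_self a S)
    have hd := Nat.div_add_mod (f a) p
    refine ⟨f a / p + K, f a % p + L, ?_, ?_, ?_⟩
    · rw [Multiset.map_cons, Multiset.sum_cons, h1, mul_add]; omega
    · rw [Multiset.card_cons]; omega
    · rw [Multiset.card_cons]
      intro hL x hx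
      rcases Multiset.mem_cons.1 hx with rfl | hx
      · omega
      · exact h3 (by omega) x hx

lemma sum_mod {α : Type*} (m : ℕ) (f : α → ℕ) (S : Multiset α)
    (h : ∀ x ∈ S, f x % (m + 1) ≤ 1) (hc : S.card ≤ m) (K' : ℕ)
    (hs : (S.map f).sum = (m + 1) * K' + m) :
    S.card = m ∧ ∀ x ∈ S, f x % (m + 1) = 1 := by
  obtain ⟨K, L, h1, h2, h3⟩ := sum_mod_aux (m + 1) f S h
  have e : ((m + 1) * K + L) % (m + 1) = ((m + 1) * K' + m) % (m + 1) := by rw [← h1, hs]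
  rw [Nat.mul_add_mod, Nat.mul_add_mod, Nat.mod_eq_of_lt (by omega),
    Nat.mod_eq_of_lt (by omega)] at e
  exact ⟨by omega, h3 (by omega)⟩

lemma sum_repU_succ (p : ℕ) (S : Multiset ℕ) :
    (S.map (fun k => repU p (k + 1))).sum = S.card + p * (S.map (repU p)).sum := by
  induction S using Multiset.induction_on with
  | empty => simp
  | cons a S ih =>
    rw [Multiset.map_cons, Multiset.sum_cons, ih, Multiset.card_cons, Multiset.map_cons,
      Multiset.sum_cons, mul_add, repU]
    omega

lemma all_eq (m n : ℕ) (hm : 1 ≤ m) : ∀ S : Multiset ℕ, S.card = m →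
    (S.map (repU (m + 1))).sum = m * repU (m + 1) n → ∀ k ∈ S, k = n := by
  induction n with
  | zero =>
    intro S _ hs k hk
    have h0 : (S.map (repU (m + 1))).sum = 0 := by simpa [repU] using hs
    have := Multiset.sum_eq_zero_iff.1 h0 (repU (m + 1) k) (Multiset.mem_map_of_mem _ hk)
    cases k with
    | zero => rfl
    | succ k => simp [repU] at this
  | succ n ih =>
    intro S hc hs
    obtain ⟨-, h1⟩ := sum_mod m (repU (m + 1)) S (fun x _ => repU_mod _ _ (by omega)) hc.le
      (m * repU (m + 1) n) (by rw [hs, repU]; ring)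
    have hpos : ∀ k ∈ S, k - 1 + 1 = k := by
      intro k hk
      have := h1 k hk
      cases k with
      | zero => simp [repU] at this
      | succ k => rfl
    have hsum : (S.map (repU (m + 1))).sum
        = ((S.map (fun k => k - 1)).map (fun k => repU (m + 1) (k + 1))).sum := by
      rw [Multiset.map_map]
      congr 1
      refine Multiset.map_congr rfl fun k hk => ?_
      simp [hpos k hk]
    rw [sum_repU_succ, Multiset.card_map, hc, hs, repU] at hsum
    have key : (m + 1) * ((S.map (fun k => k - 1)).map (repU (m + 1))).sum
        = (m + 1) * (m * repU (m + 1) n) := by linarith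
    have := ih (S.map (fun k => k - 1)) (by simp [hc])
      (Nat.eq_of_mul_eq_mul_left (by omega) key)
    intro k hk
    have h2 := this (k - 1) (Multiset.mem_map_of_mem (fun k => k - 1) hk)
    have h3 := hpos k hk
    omega

lemma totalDeg_eq (m : ℕ) (S : Multiset MayGen) :
    totalDeg (m + 1) S = 2 * m * (S.map (eQ (m + 1))).sum + (S.map tQ).sum := by
  unfold totalDeg
  induction S using Multiset.induction_on with
  | empty => simp
  | cons a S ih =>
    simp only [Multiset.map_cons, Multiset.sum_cons]
    rw [ih, deg_eq, mul_add]
    omega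

lemma card_le (S : Multiset MayGen) : S.card ≤ totalFilt S ∧ (S.map tQ).sum ≤ S.card := by
  unfold totalFilt
  induction S using Multiset.induction_on with
  | empty => simp
  | cons a S ih =>
    simp only [Multiset.map_cons, Multiset.sum_cons, Multiset.card_cons]
    cases a <;> simp only [MayGen.filt, tQ] <;> omega

lemma count_aux (n : ℕ) (S : Multiset MayGen) : (∀ x ∈ S, x = .a n ∨ x = .h n 0) →
    S.count (.h n 0) + (S.map tQ).sum = S.card := by
  induction S using Multiset.induction_on with
  | empty => simp
  | cons a S ih =>
    intro h
    have ih' := ih fun x hx => h x (Multiset.mem_cons_of_mem hx)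
    rcases h a (Multiset.mem_cons_self a S) with rfl | rfl
    · simp only [Multiset.map_cons, Multiset.sum_cons, Multiset.card_cons, tQ]
      rw [Multiset.count_cons_of_ne (by simp)]
      omega
    · simp only [Multiset.map_cons, Multiset.sum_cons, Multiset.card_cons, tQ,
        Multiset.count_cons_self]
      omega

lemma main_aux (m n : ℕ) (hm : 4 ≤ m) (hn : 1 ≤ n) (S : Multiset MayGen)
    (hf : totalFilt S = m)
    (hd : totalDeg (m + 1) S = 2 * m * ((m + 1) ^ n - 1) + (m - 2)) :
    2 ≤ S.count (MayGen.h n 0) := by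
  obtain ⟨hc, ht⟩ := card_le S
  rw [totalDeg_eq, repU_eq m n, Nat.add_sub_cancel] at hd
  have hT : (S.map tQ).sum = m - 2 := by
    have e := congrArg (· % (2 * m)) hd
    simp only [Nat.mul_add_mod] at e
    rwa [Nat.mod_eq_of_lt (by omega), Nat.mod_eq_of_lt (by omega)] at e
  have hE : (S.map (eQ (m + 1))).sum = m * repU (m + 1) n := by
    rw [hT] at hd
    exact Nat.eq_of_mul_eq_mul_left (by omega) (Nat.add_right_cancel hd)
  obtain ⟨n, rfl⟩ : ∃ l, n = l + 1 := ⟨n - 1, by omega⟩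
  obtain ⟨hcard, h1⟩ := sum_mod m (eQ (m + 1)) S (fun x _ => eQ_mod _ (by omega) x) (by omega)
    (m * repU (m + 1) n) (by rw [hE, repU]; ring)
  have hshape : ∀ x ∈ S, x = .a (lenQ x) ∨ x = .h (lenQ x) 0 := by
    intro x hx
    have := h1 x hx
    cases x with
    | a k => simp [lenQ]
    | h i j =>
      cases j with
      | zero => simp [lenQ]
      | succ j => simp [eQ, pow_succ, ← mul_assoc] at this
    | b i j => simp [eQ, pow_succ, ← mul_assoc] at this
  have hsum : ((S.map lenQ).map (repU (m + 1))).sum = m * repU (m + 1) (n + 1) := by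
    rw [← hE, Multiset.map_map]
    congr 1
    refine Multiset.map_congr rfl fun x hx => ?_
    rcases hshape x hx with h | h <;> rw [h] <;> simp [lenQ, eQ]
  have hall := all_eq m (n + 1) (by omega) (S.map lenQ) (by simp [hcard]) hsum
  have := count_aux (n + 1) S fun x hx => by
    have h2 := hshape x hx
    rwa [hall _ (Multiset.mem_map_of_mem lenQ hx)] at h2
  omega

/-- for `n ≥ 2`, every finite multiset of May generators of total filtration
`p-1` and total degree `q(pⁿ - 1) + (p - 3)` contains `h n 0` at least twice; in particular
there is no admissible monomial with these total filtration and degree. -/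
theorem stmt14 (p : ℕ) (hp : p.Prime) (hp5 : 5 ≤ p) (n : ℕ) (hn : 2 ≤ n) :
    (∀ S : Multiset MayGen, (∀ x ∈ S, x.IsValid) → totalFilt S = p - 1 →
      totalDeg p S = 2 * (p - 1) * (p ^ n - 1) + (p - 3) →
      2 ≤ S.count (MayGen.h n 0)) ∧
    ¬ ∃ S : Multiset MayGen, (∀ x ∈ S, x.IsValid) ∧ Admissible S ∧
      totalFilt S = p - 1 ∧ totalDeg p S = 2 * (p - 1) * (p ^ n - 1) + (p - 3) := by
  obtain ⟨m, rfl⟩ : ∃ m, p = m + 1 := ⟨p - 1, by omega⟩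
  have key : ∀ S : Multiset MayGen, totalFilt S = m + 1 - 1 →
      totalDeg (m + 1) S = 2 * (m + 1 - 1) * ((m + 1) ^ n - 1) + (m + 1 - 3) →
      2 ≤ S.count (MayGen.h n 0) := by
    intro S hf hd
    exact main_aux m n (by omega) (by omega) S hf hd
  refine ⟨fun S _ hf hd => key S hf hd, ?_⟩
  rintro ⟨S, _, hA, hf, hd⟩
  have h1 := key S hf hd
  have h2 := hA n 0
  omega
end
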